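/- Let w ∈ (S∪E∪Q∪O)* be a word that is not a word over S alone (i.e. w ∉ S*). Then w is ≈-equivalent to an element of the image of ρ. -/

import Mathlib

/-!
The proof takes place in the quotient monoid `M` of words modulo `≈` (`RookM n`), with `I ⊆ M` the
image of `ρ` (`Im`). Since `s_k² = 1`, conjugation by `s_k` (`cj k`) is an endomorphism of `M`. It
permutes the `e_j`, the `o_j` and the classes of the words `τ_ij` (`exists_cj_gT`, a case analysis
on the position of `k` relative to `i < j` using the braid relations), so `I` is closed under
conjugation by every `s_k`.

The central point is that `I` also absorbs the `s_k`. For the generators `e_j` adjacent to `k`, one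
has `e_k s_k = e_k q_k e_{k+1}` and `e_{k+1} s_k = e_{k+1} q_k e_k`. For the other `e_j`, conjugation
reduces to the case where `j` is next to `{k, k+1}`, and there `e_j s_k` factors into three elements
that are, up to conjugation, of the adjacent kind (`Im.gE_gS`). Every other generator `g` satisfies
`g e_m g = g` for some `m`, so `g s_k = g (e_m s_k) (s_k g s_k)` lies in `I`. Hence `I s_k ⊆ I`, and
`s_k x = (s_k x s_k) s_k` gives `s_k I ⊆ I`. As `I` contains every letter outside `S`, a word with at
least one such letter has its class in `I`.
-/

namespace RookPaper

/-- Reflexive–symmetric–transitive closure of a relation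
(connectivity by paths in a graph). -/
inductive RClosure {V : Type*} (E : V → V → Prop) : V → V → Prop
  | base {x y : V} : E x y → RClosure E x y
  | refl (x : V) : RClosure E x x
  | symm {x y : V} : RClosure E x y → RClosure E y x
  | trans {x y z : V} : RClosure E x y → RClosure E y z → RClosure E x z

/-- The 2n points `1,…,n` (`Sum.inl`) and `1',…,n'` (`Sum.inr`). -/
abbrev Pt (n : ℕ) := Fin n ⊕ Fin n

/-- A rook partition of degree `n`, encoded as a partial equivalence relation on the
`2n` points: its blocks are the equivalence classes of `rel`, and the rook dots are the
points `x` with `¬ rel x x`. -/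
structure RP (n : ℕ) where
  rel : Pt n → Pt n → Prop
  symm : ∀ {x y : Pt n}, rel x y → rel y x
  trans : ∀ {x y z : Pt n}, rel x y → rel y z → rel x z

/-- The underlying index in `[n]` of a point (`i` and `i'` both have index `i`). -/
def idx {n : ℕ} : Pt n → Fin n := Sum.elim id id

/-- For `A ⊆ [n]`, the corresponding set of upper points. -/
def upSet {n : ℕ} (A : Set (Fin n)) : Set (Pt n) := Sum.inl '' A

/-- For `B ⊆ [n]`, the set `B' = {b' : b ∈ B}` of lower points. -/
def dnSet {n : ℕ} (B : Set (Fin n)) : Set (Pt n) := Sum.inr '' B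

/-- `x` is a rook dot of `α`. -/
def RP.IsRookDot {n : ℕ} (α : RP n) (x : Pt n) : Prop := ¬ α.rel x x

/-- `α` has no rook dots, i.e. `α` lies in the partition monoid `P_n`. -/
def RP.NoDots {n : ℕ} (α : RP n) : Prop := ∀ x, α.rel x x

/-- `B` is a block of `α`. -/
def RP.IsBlock {n : ℕ} (α : RP n) (B : Set (Pt n)) : Prop :=
  ∃ x, α.rel x x ∧ B = {y | α.rel x y}

/-- The identity rook partition, with blocks `{i,i'}`. -/
instance {n : ℕ} : One (RP n) :=
  ⟨{ rel := fun x y => idx x = idx y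
     symm := fun h => Eq.symm h
     trans := fun h h' => Eq.trans h h' }⟩

/-! The product graph `Γ(α,β)` lives on three rows of `n` vertices. -/

abbrev V3 (n : ℕ) := Fin n ⊕ Pt n

def vTop {n : ℕ} (i : Fin n) : V3 n := Sum.inl i
def vMid {n : ℕ} (i : Fin n) : V3 n := Sum.inr (Sum.inl i)
def vBot {n : ℕ} (i : Fin n) : V3 n := Sum.inr (Sum.inr i)

/-- `α` occupies the top and middle rows. -/
def embA {n : ℕ} : Pt n → V3 n := Sum.elim vTop vMid
/-- `β` occupies the middle and bottom rows. -/
def embB {n : ℕ} : Pt n → V3 n := Sum.elim vMid vBot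
/-- The product `αβ` lives on the top and bottom rows. -/
def embOut {n : ℕ} : Pt n → V3 n := Sum.elim vTop vBot

/-- The edges of the product graph `Γ(α,β)`. -/
def pgEdge {n : ℕ} (α β : RP n) (x y : V3 n) : Prop :=
  (∃ a b : Pt n, α.rel a b ∧ x = embA a ∧ y = embA b) ∨
  (∃ a b : Pt n, β.rel a b ∧ x = embB a ∧ y = embB b)

/-- Connectivity (by a possibly empty path) in the product graph `Γ(α,β)`. -/
def pgConn {n : ℕ} (α β : RP n) : V3 n → V3 n → Prop :=
  RClosure (pgEdge α β)

/-- The white vertices of `Γ(α,β)`: a top vertex is white if it is a rook dot of `α`,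
a bottom vertex is white if it is a rook dot of `β`, and a middle vertex is white if it is
a rook dot of `α` (as a lower point) or of `β` (as an upper point). -/
def pgWhite {n : ℕ} (α β : RP n) (v : V3 n) : Prop :=
  (∃ i, v = vTop i ∧ ¬ α.rel (Sum.inl i) (Sum.inl i)) ∨
  (∃ i, v = vMid i ∧ (¬ α.rel (Sum.inr i) (Sum.inr i) ∨ ¬ β.rel (Sum.inl i) (Sum.inl i))) ∨
  (∃ i, v = vBot i ∧ ¬ β.rel (Sum.inr i) (Sum.inr i))

/-- The product of two rook partitions: a point of `αβ` is a rook dot iff it is connected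
to a white vertex of `Γ(α,β)`, and two points are in the same block of `αβ` iff they are
connected in `Γ(α,β)` (and are not rook dots). -/
instance {n : ℕ} : Mul (RP n) :=
  ⟨fun α β =>
    { rel := fun x y =>
        pgConn α β (embOut x) (embOut y) ∧
          ∀ w, pgWhite α β w → ¬ pgConn α β (embOut x) w
      symm := by
        intro x y h
        exact ⟨RClosure.symm h.1, fun w hw hc => h.2 w hw (RClosure.trans h.1 hc)⟩
      trans := by
        intro x y z h h'
        exact ⟨RClosure.trans h.1 h'.1, h.2⟩ }⟩

/-- The rook partition corresponding to a permutation `σ`: blocks `{i, (σ i)'}`. -/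
def permRP {n : ℕ} (σ : Equiv.Perm (Fin n)) : RP n where
  rel x y := Sum.elim (fun i => σ i) (fun i => i) x = Sum.elim (fun i => σ i) (fun i => i) y
  symm := fun h => Eq.symm h
  trans := fun h h' => Eq.trans h h'

/-- `α` lies in the copy of the symmetric group `S_n` inside `RP_n`. -/
def RP.IsPermDiag {n : ℕ} (α : RP n) : Prop := ∃ σ : Equiv.Perm (Fin n), α = permRP σ

/-- The generator `ē_i` : blocks `{j,j'}` for `j ≠ i`, and singleton blocks `{i}`, `{i'}`. -/
def ebar {n : ℕ} (i : Fin n) : RP n where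
  rel x y := x = y ∨ (idx x = idx y ∧ idx x ≠ i)
  symm := by
    rintro x y (rfl | ⟨h1, h2⟩)
    · exact Or.inl rfl
    · exact Or.inr ⟨h1.symm, h1 ▸ h2⟩
  trans := by
    rintro x y z (rfl | ⟨h1, h2⟩) h
    · exact h
    · rcases h with rfl | ⟨h3, h4⟩
      · exact Or.inr ⟨h1, h2⟩
      · exact Or.inr ⟨h1.trans h3, h2⟩

/-- The generator `t̄_ij` (for `i ≠ j`): blocks `{k,k'}` for `k ∉ {i,j}`, and `{i,j,i',j'}`. -/
def tbar {n : ℕ} (i j : Fin n) : RP n where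
  rel x y := idx x = idx y ∨ ((idx x = i ∨ idx x = j) ∧ (idx y = i ∨ idx y = j))
  symm := by
    rintro x y (h | ⟨h1, h2⟩)
    · exact Or.inl h.symm
    · exact Or.inr ⟨h2, h1⟩
  trans := by
    rintro x y z hxy hyz
    rcases hxy with h | ⟨h1, h2⟩
    · rcases hyz with h' | ⟨h3, h4⟩
      · exact Or.inl (h.trans h')
      · refine Or.inr ⟨?_, h4⟩
        rw [h]; exact h3
    · rcases hyz with h' | ⟨h3, h4⟩
      · refine Or.inr ⟨h1, ?_⟩
        rw [← h']; exact h2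
      · exact Or.inr ⟨h1, h4⟩

/-- `ō_A` for a subset `A ⊆ [n]`: rook dots at all points of `A ∪ A'`, blocks `{j,j'}` for
`j ∉ A`. -/
def obarS {n : ℕ} (A : Set (Fin n)) : RP n where
  rel x y := idx x = idx y ∧ idx x ∉ A
  symm := by
    rintro x y ⟨h1, h2⟩
    exact ⟨h1.symm, h1 ▸ h2⟩
  trans := by
    rintro x y z ⟨h1, h2⟩ ⟨h3, h4⟩
    exact ⟨h1.trans h3, h2⟩

/-- The generator `ō_i`: rook dots `i` and `i'`, blocks `{j,j'}` for `j ≠ i`. -/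
def obar {n : ℕ} (i : Fin n) : RP n := obarS {i}

/-- For an index `i` of a simple transposition (`1 ≤ i ≤ n-1`, zero-based `Fin (n-1)`),
the smaller of the two swapped points. -/
def lo {n : ℕ} (i : Fin (n - 1)) : Fin n := ⟨i.val, by have := i.isLt; omega⟩
/-- The larger of the two swapped points. -/
def hi {n : ℕ} (i : Fin (n - 1)) : Fin n := ⟨i.val + 1, by have := i.isLt; omega⟩

/-- The generator `s̄_i`: the simple transposition with blocks `{i,(i+1)'}`, `{i+1,i'}`,
and `{j,j'}` for other `j`. -/
def sbar {n : ℕ} (i : Fin (n - 1)) : RP n := permRP (Equiv.swap (lo i) (hi i))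

/-- The generator `q̄_i = t̄_{i,i+1}`. -/
def qbar {n : ℕ} (i : Fin (n - 1)) : RP n := tbar (lo i) (hi i)

/-- Membership in the subsemigroup generated by a subset `X`. -/
inductive SgGen {M : Type*} [Mul M] (X : Set M) : M → Prop
  | incl {x : M} : x ∈ X → SgGen X x
  | mul {a b : M} : SgGen X a → SgGen X b → SgGen X (a * b)

/-- Membership in the submonoid generated by a subset `X`. -/
inductive MonGen {M : Type*} [Mul M] [One M] (X : Set M) : M → Prop
  | one : MonGen X 1
  | incl {x : M} : x ∈ X → MonGen X x
  | mul {a b : M} : MonGen X a → MonGen X b → MonGen X (a * b)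

/-- Evaluation of a word under a map on the letters (the product, in order, of the images
of the letters; the empty word evaluates to `1`). -/
def evalWord {X M : Type*} [Mul M] [One M] (f : X → M) : List X → M
  | [] => 1
  | [x] => f x
  | x :: y :: w => f x * evalWord f (y :: w)

/-- The congruence on the free monoid of words (with product = concatenation) generated
by a set of pairs `R`.  Restricted to nonempty words it is the congruence on the free
semigroup generated by `R`. -/
inductive CongGen {X : Type*} (R : List X → List X → Prop) : List X → List X → Prop
  | rel {u v : List X} : R u v → CongGen R u v
  | refl (u : List X) : CongGen R u u
  | symm {u v : List X} : CongGen R u v → CongGen R v u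
  | trans {u v w : List X} : CongGen R u v → CongGen R v w → CongGen R u w
  | mul {u v u' v' : List X} : CongGen R u v → CongGen R u' v' → CongGen R (u ++ u') (v ++ v')


/-! ## The alphabet E ∪ T ∪ O and the relations (R1)–(R17) -/

/-- The alphabet `E ∪ T ∪ O`: letters `e_i` (`i ∈ [n]`), `t_ij` (`1 ≤ i < j ≤ n`,
with the convention `t_ij = t_ji`), and `o_i` (`i ∈ [n]`). -/
inductive ETO (n : ℕ) : Type
  | e : Fin n → ETO n
  | t : (i j : Fin n) → i < j → ETO n
  | o : Fin n → ETO n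

/-- The letter `t_ij = t_ji`, for distinct `i, j`. -/
def tg {n : ℕ} (i j : Fin n) (h : i ≠ j) : ETO n :=
  if hlt : i < j then ETO.t i j hlt else ETO.t j i (h.symm.lt_of_le (not_lt.mp hlt))

/-- The letter `t_ij` when `i ≠ j`, and the empty word when `i = j`. -/
def tgd {n : ℕ} (i j : Fin n) : List (ETO n) :=
  if h : i = j then [] else [tg i j h]

/-- `x` is a letter of `E ∪ T`. -/
def ETO.isET {n : ℕ} : ETO n → Prop
  | .o _ => False
  | _ => True

/-- `x` is a letter of `O`. -/
def ETO.isO {n : ℕ} : ETO n → Prop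
  | .o _ => True
  | _ => False

/-- The relations (R1)–(R17). -/
inductive RelETO (n : ℕ) : List (ETO n) → List (ETO n) → Prop
  | r1 (i : Fin n) : RelETO n [.e i, .e i] [.e i]
  | r2 (i j : Fin n) (h : i ≠ j) : RelETO n [.e i, .e j] [.e j, .e i]
  | r3 (i j : Fin n) (h : i ≠ j) : RelETO n [tg i j h, tg i j h] [tg i j h]
  | r4 (i j k l : Fin n) (hij : i ≠ j) (hkl : k ≠ l) :
      RelETO n [tg i j hij, tg k l hkl] [tg k l hkl, tg i j hij]
  | r5 (i j k : Fin n) (hij : i ≠ j) (hjk : j ≠ k) (hik : i ≠ k) :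
      RelETO n [tg i j hij, tg j k hjk] [tg j k hjk, tg k i hik.symm]
  | r6 (i j k : Fin n) (hij : i ≠ j) (hki : k ≠ i) (hkj : k ≠ j) :
      RelETO n [tg i j hij, .e k] [.e k, tg i j hij]
  | r7 (i j k : Fin n) (hij : i ≠ j) (hk : k = i ∨ k = j) :
      RelETO n [tg i j hij, .e k, tg i j hij] [tg i j hij]
  | r8 (i j k : Fin n) (hij : i ≠ j) (hk : k = i ∨ k = j) :
      RelETO n [.e k, tg i j hij, .e k] [.e k]
  | r9 (i j k : Fin n) (hij : i ≠ j) (hjk : j ≠ k) (hik : i ≠ k) :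
      RelETO n [.e k, tg k i hik.symm, .e i, tg i j hij, .e j, tg j k hjk, .e k]
               [.e k, tg k j hjk.symm, .e j, tg j i hij.symm, .e i, tg i k hik, .e k]
  | r10 (i j k l : Fin n) (hij : i ≠ j) (hik : i ≠ k) (hil : i ≠ l)
        (hjk : j ≠ k) (hjl : j ≠ l) (hkl : k ≠ l) :
      RelETO n [.e k, tg k i hik.symm, .e i, tg i j hij, .e j, tg j l hjl, .e l,
                  tg l k hkl.symm, .e k]
               [.e k, tg k l hkl, .e l, tg l i hil.symm, .e i, tg i j hij, .e j,
                  tg j k hjk, .e k]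
  | r11 (i : Fin n) : RelETO n [.o i, .o i] [.o i]
  | r12 (i j : Fin n) (h : i ≠ j) : RelETO n [.o i, .o j] [.o j, .o i]
  | r13 (i j : Fin n) (h : i ≠ j) : RelETO n [.o i, .e j] [.e j, .o i]
  | r14 (i : Fin n) : RelETO n [.o i, .e i, .o i] [.o i]
  | r15 (i : Fin n) : RelETO n [.e i, .o i, .e i] [.e i]
  | r16 (i j k : Fin n) (hij : i ≠ j) : RelETO n [tg i j hij, .o k] [.o k, tg i j hij]
  | r17a (i j : Fin n) (h : i ≠ j) : RelETO n [tg i j h, .o i] [.o i, .o j]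
  | r17b (i j : Fin n) (h : i ≠ j) : RelETO n [tg i j h, .o j] [.o i, .o j]

/-- The map `Φ` on letters. -/
def phiLetter {n : ℕ} : ETO n → RP n
  | .e i => ebar i
  | .t i j _ => tbar i j
  | .o i => obar i

/-- The homomorphism `Φ : (E ∪ T ∪ O)⁺ → RP_n`. -/
def PhiETO {n : ℕ} : List (ETO n) → RP n := evalWord phiLetter

/-- For `A = {i₁ < ⋯ < i_k} ⊆ [n]`, the word `o_A = o_{i₁} ⋯ o_{i_k}`. -/
def oWord {n : ℕ} (A : Finset (Fin n)) : List (ETO n) :=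
  (A.sort (· ≤ ·)).map ETO.o

/-- The chain of `t`-letters along consecutive members of a list. -/
def tChain {n : ℕ} : List (Fin n) → List (ETO n)
  | a :: b :: rest => tgd a b ++ tChain (b :: rest)
  | _ => []

/-- For `A = {i₁ < ⋯ < i_k} ⊆ [n]`, the word `t_A = t_{i₁i₂} t_{i₂i₃} ⋯ t_{i_{k-1}i_k}`
(the empty word if `|A| ≤ 1`). -/
def tWord {n : ℕ} (A : Finset (Fin n)) : List (ETO n) :=
  tChain (A.sort (· ≤ ·))

/-- The word `e_ij = e_i t_ij e_j` for distinct `i, j`. -/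
def eWord {n : ℕ} (i j : Fin n) (h : i ≠ j) : List (ETO n) :=
  [ETO.e i, tg i j h, ETO.e j]

/-- `α` lies in (the copy inside `RP_n` of) the symmetric inverse monoid `I_n`:
no rook dots, and every block has at most one upper and at most one lower point. -/
def RP.MemIn {n : ℕ} (α : RP n) : Prop :=
  α.NoDots ∧ (∀ i j : Fin n, α.rel (Sum.inl i) (Sum.inl j) → i = j) ∧
    (∀ i j : Fin n, α.rel (Sum.inr i) (Sum.inr j) → i = j)


/-! ## The alphabet S ∪ E ∪ Q ∪ O and the relations (R18)–(R43) -/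

/-- The alphabet `S ∪ E ∪ Q ∪ O`: letters `s_i, q_i` (`1 ≤ i ≤ n-1`, zero-based) and
`e_i, o_i` (`i ∈ [n]`). -/
inductive SEQO (n : ℕ) : Type
  | s : Fin (n - 1) → SEQO n
  | e : Fin n → SEQO n
  | q : Fin (n - 1) → SEQO n
  | o : Fin n → SEQO n

/-- `x` is a letter of `S`. -/
def SEQO.isS {n : ℕ} : SEQO n → Prop
  | .s _ => True
  | _ => False

/-- The relations (R18)–(R43). -/
inductive RelSEQO (n : ℕ) : List (SEQO n) → List (SEQO n) → Prop
  | r18 (i : Fin (n - 1)) : RelSEQO n [.s i, .s i] []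
  | r19 (i j : Fin (n - 1)) (h : i.val + 1 < j.val ∨ j.val + 1 < i.val) :
      RelSEQO n [.s i, .s j] [.s j, .s i]
  | r20 (i j : Fin (n - 1)) (h : i.val + 1 = j.val ∨ j.val + 1 = i.val) :
      RelSEQO n [.s i, .s j, .s i] [.s j, .s i, .s j]
  | r21 (i : Fin n) : RelSEQO n [.e i, .e i] [.e i]
  | r22 (i j : Fin n) (h : i ≠ j) : RelSEQO n [.e i, .e j] [.e j, .e i]
  | r23 (i : Fin (n - 1)) (j : Fin n) (h : j ≠ lo i ∧ j ≠ hi i) :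
      RelSEQO n [.s i, .e j] [.e j, .s i]
  | r24 (i : Fin (n - 1)) : RelSEQO n [.s i, .e (lo i)] [.e (hi i), .s i]
  | r25 (i : Fin (n - 1)) : RelSEQO n [.e (lo i), .e (hi i), .s i] [.e (lo i), .e (hi i)]
  | r26 (i : Fin (n - 1)) : RelSEQO n [.q i, .q i] [.q i]
  | r27 (i j : Fin (n - 1)) (h : i ≠ j) : RelSEQO n [.q i, .q j] [.q j, .q i]
  | r28 (i j : Fin (n - 1)) (h : i.val + 1 < j.val ∨ j.val + 1 < i.val) :
      RelSEQO n [.s i, .q j] [.q j, .s i]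
  | r29 (i j : Fin (n - 1)) (h : i.val + 1 = j.val ∨ j.val + 1 = i.val) :
      RelSEQO n [.s i, .s j, .q i] [.q j, .s i, .s j]
  | r30a (i : Fin (n - 1)) : RelSEQO n [.q i, .s i] [.q i]
  | r30b (i : Fin (n - 1)) : RelSEQO n [.s i, .q i] [.q i]
  | r31 (i : Fin (n - 1)) (j : Fin n) (h : j ≠ lo i ∧ j ≠ hi i) :
      RelSEQO n [.q i, .e j] [.e j, .q i]
  | r32 (i : Fin (n - 1)) (j : Fin n) (h : j = lo i ∨ j = hi i) :
      RelSEQO n [.q i, .e j, .q i] [.q i]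
  | r33 (i : Fin (n - 1)) (j : Fin n) (h : j = lo i ∨ j = hi i) :
      RelSEQO n [.e j, .q i, .e j] [.e j]
  | r34 (i : Fin n) : RelSEQO n [.o i, .o i] [.o i]
  | r35 (i j : Fin n) (h : i ≠ j) : RelSEQO n [.o i, .o j] [.o j, .o i]
  | r36 (i : Fin (n - 1)) (j : Fin n) (h : j ≠ lo i ∧ j ≠ hi i) :
      RelSEQO n [.s i, .o j] [.o j, .s i]
  | r37 (i : Fin (n - 1)) : RelSEQO n [.s i, .o (lo i)] [.o (hi i), .s i]
  | r38 (i : Fin (n - 1)) : RelSEQO n [.o (lo i), .o (hi i), .s i] [.o (lo i), .o (hi i)]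
  | r39 (i j : Fin n) (h : i ≠ j) : RelSEQO n [.o i, .e j] [.e j, .o i]
  | r40 (i : Fin n) : RelSEQO n [.o i, .e i, .o i] [.o i]
  | r41 (i : Fin n) : RelSEQO n [.e i, .o i, .e i] [.e i]
  | r42 (i : Fin (n - 1)) (j : Fin n) : RelSEQO n [.q i, .o j] [.o j, .q i]
  | r43a (i : Fin (n - 1)) : RelSEQO n [.q i, .o (lo i)] [.o (lo i), .o (hi i)]
  | r43b (i : Fin (n - 1)) : RelSEQO n [.q i, .o (hi i)] [.o (lo i), .o (hi i)]

/-- The map `Ψ` on letters. -/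
def psiLetter {n : ℕ} : SEQO n → RP n
  | .s i => sbar i
  | .e i => ebar i
  | .q i => qbar i
  | .o i => obar i

/-- The homomorphism `Ψ : (S ∪ E ∪ Q ∪ O)* → RP_n`. -/
def PsiW {n : ℕ} : List (SEQO n) → RP n := evalWord psiLetter

/-- The word `σ_ij = s_{i+1} ⋯ s_{j-1}` (for points `i < j`, zero-based: the `s`-letters
with zero-based indices strictly between `i` and `j`, in increasing order). -/
def sigmaW {n : ℕ} (i j : Fin n) : List (SEQO n) :=
  ((List.finRange (n - 1)).filter (fun k => decide (i.val < k.val ∧ k.val < j.val))).map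
    SEQO.s

/-- The word `τ_ij = σ_ij⁻¹ q_i σ_ij`, whose image under `Ψ` is `t̄_ij`. -/
def tauW {n : ℕ} (i j : Fin n) (h : i < j) : List (SEQO n) :=
  (sigmaW i j).reverse ++
    (SEQO.q ⟨i.val, by have hb := j.isLt; have hab : i.val < j.val := h; omega⟩ ::
      sigmaW i j)

/-- The homomorphism `ρ` on letters: `e_i ↦ e_i`, `o_i ↦ o_i`, `t_ij ↦ τ_ij`. -/
def rhoLetter {n : ℕ} : ETO n → List (SEQO n)
  | .e i => [SEQO.e i]
  | .t i j h => tauW i j h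
  | .o i => [SEQO.o i]

/-- The semigroup homomorphism `ρ : (E ∪ T ∪ O)⁺ → (S ∪ E ∪ Q ∪ O)*`. -/
def rho {n : ℕ} (w : List (ETO n)) : List (SEQO n) :=
  w.foldr (fun x acc => rhoLetter x ++ acc) []


/-! ### The quotient monoid -/

/-- The congruence `≈` as a setoid on words. -/
def wordSetoid (n : ℕ) : Setoid (List (SEQO n)) where
  r := CongGen (RelSEQO n)
  iseqv := ⟨CongGen.refl, CongGen.symm, CongGen.trans⟩

/-- The quotient of the free monoid on `S ∪ E ∪ Q ∪ O` by `≈`. -/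
abbrev RookM (n : ℕ) := Quotient (wordSetoid n)

/-- The `≈`-class of a word. -/
def cls {n : ℕ} (w : List (SEQO n)) : RookM n := Quotient.mk (wordSetoid n) w

instance (n : ℕ) : Monoid (RookM n) where
  mul := Quotient.map₂ (· ++ ·) fun _ _ h _ _ h' => CongGen.mul h h'
  one := cls []
  mul_assoc a b c := by
    induction a using Quotient.inductionOn with | _ a
    induction b using Quotient.inductionOn with | _ b
    induction c using Quotient.inductionOn with | _ c
    exact congrArg cls (List.append_assoc a b c)
  one_mul a := by
    induction a using Quotient.inductionOn with | _ a
    rfl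
  mul_one a := by
    induction a using Quotient.inductionOn with | _ a
    exact congrArg cls (List.append_nil a)

theorem cls_append {n : ℕ} (a b : List (SEQO n)) : cls (a ++ b) = cls a * cls b := rfl

theorem cls_cons {n : ℕ} (a : SEQO n) (b : List (SEQO n)) : cls (a :: b) = cls [a] * cls b := rfl

theorem cls_nil {n : ℕ} : cls ([] : List (SEQO n)) = 1 := rfl

theorem cls_eq {n : ℕ} {u v : List (SEQO n)} (h : RelSEQO n u v) : cls u = cls v :=
  Quotient.sound (CongGen.rel h)

/-- The class of the letter `s_k` (zero-based), extended by `1` to all `k : ℕ`. -/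
def gS (n k : ℕ) : RookM n := if h : k < n - 1 then cls [.s ⟨k, h⟩] else 1

/-- The class of the letter `q_k` (zero-based), extended by `1` to all `k : ℕ`. -/
def gQ (n k : ℕ) : RookM n := if h : k < n - 1 then cls [.q ⟨k, h⟩] else 1

/-- The class of the letter `e_j` (zero-based), extended by `1` to all `j : ℕ`. -/
def gE (n j : ℕ) : RookM n := if h : j < n then cls [.e ⟨j, h⟩] else 1

/-- The class of the letter `o_j` (zero-based), extended by `1` to all `j : ℕ`. -/
def gO (n j : ℕ) : RookM n := if h : j < n then cls [.o ⟨j, h⟩] else 1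

theorem gS_sq (n k : ℕ) : gS n k * gS n k = 1 := by
  unfold gS
  split_ifs with h
  · exact cls_eq (.r18 ⟨k, h⟩)
  · exact one_mul 1

theorem gS_sq_assoc {n : ℕ} (k : ℕ) (x : RookM n) : gS n k * (gS n k * x) = x := by
  rw [← mul_assoc, gS_sq, one_mul]

theorem gS_comm {n k l : ℕ} (h : k + 1 < l ∨ l + 1 < k) :
    gS n k * gS n l = gS n l * gS n k := by
  unfold gS
  split_ifs with h1 h2
  · exact cls_eq (.r19 ⟨k, h1⟩ ⟨l, h2⟩ h)
  all_goals simp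

theorem gS_braid {n k : ℕ} (h : k + 1 < n - 1) :
    gS n k * gS n (k + 1) * gS n k = gS n (k + 1) * gS n k * gS n (k + 1) := by
  have h' : k < n - 1 := by omega
  simp only [gS, h, h', dif_pos]
  exact cls_eq (.r20 ⟨k, h'⟩ ⟨k + 1, h⟩ (Or.inl rfl))

/-- Conjugation by the involution `s_k`. -/
def cj {n : ℕ} (k : ℕ) (x : RookM n) : RookM n := gS n k * x * gS n k

theorem cj_mul {n : ℕ} (k : ℕ) (x y : RookM n) : cj k (x * y) = cj k x * cj k y := by
  simp only [cj, mul_assoc, gS_sq_assoc]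

theorem cj_cj {n : ℕ} (k : ℕ) (x : RookM n) : cj k (cj k x) = x := by
  simp only [cj, mul_assoc, gS_sq_assoc, gS_sq, mul_one]

theorem cj_eq_of_comm {n k : ℕ} {x : RookM n} (h : gS n k * x = x * gS n k) : cj k x = x := by
  rw [cj, h, mul_assoc, gS_sq, mul_one]

theorem cj_eq_of_mul {n k : ℕ} {x y : RookM n} (h : gS n k * x = y * gS n k) : cj k x = y := by
  rw [cj, h, mul_assoc, gS_sq, mul_one]

/-- `x s_k = s_k (s_k x s_k)`. -/
theorem mul_gS {n : ℕ} (k : ℕ) (x : RookM n) : x * gS n k = gS n k * cj k x := by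
  simp only [cj, mul_assoc, gS_sq_assoc]

/-- `s_k x = (s_k x s_k) s_k`. -/
theorem gS_mul {n : ℕ} (k : ℕ) (x : RookM n) : gS n k * x = cj k x * gS n k := by
  simp only [cj, mul_assoc, gS_sq, mul_one]

theorem cj_comm {n k l : ℕ} (h : k + 1 < l ∨ l + 1 < k) (x : RookM n) :
    cj k (cj l x) = cj l (cj k x) := by
  have h1 := gS_comm (n := n) h
  calc cj k (cj l x) = (gS n k * gS n l) * x * (gS n l * gS n k) := by simp only [cj, mul_assoc]
    _ = (gS n l * gS n k) * x * (gS n k * gS n l) := by rw [h1]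
    _ = _ := by simp only [cj, mul_assoc]

theorem cj_braid {n k : ℕ} (h : k + 1 < n - 1) (x : RookM n) :
    cj k (cj (k + 1) (cj k x)) = cj (k + 1) (cj k (cj (k + 1) x)) := by
  calc cj k (cj (k + 1) (cj k x))
      = (gS n k * gS n (k + 1) * gS n k) * x * (gS n k * gS n (k + 1) * gS n k) := by
        simp only [cj, mul_assoc]
    _ = (gS n (k + 1) * gS n k * gS n (k + 1)) * x *
          (gS n (k + 1) * gS n k * gS n (k + 1)) := by rw [gS_braid h]
    _ = _ := by simp only [cj, mul_assoc]

theorem cj_gS_of_far {n k l : ℕ} (h : k + 1 < l ∨ l + 1 < k) : cj k (gS n l) = gS n l :=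
  cj_eq_of_comm (gS_comm h)

/-! ### The action of the simple transpositions on the generators -/

theorem cj_gE_lo {n k : ℕ} (h : k < n - 1) : cj k (gE n k) = gE n (k + 1) := by
  have h1 : k < n := by omega
  have h2 : k + 1 < n := by omega
  apply cj_eq_of_mul
  simp only [gS, gE, h, h1, h2, dif_pos]
  exact cls_eq (.r24 ⟨k, h⟩)

theorem cj_gE_hi {n k : ℕ} (h : k < n - 1) : cj k (gE n (k + 1)) = gE n k := by
  rw [← cj_gE_lo h, cj_cj]

theorem cj_gE_far {n k j : ℕ} (h : j ≠ k ∧ j ≠ k + 1) : cj k (gE n j) = gE n j := by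
  apply cj_eq_of_comm
  unfold gS gE
  split_ifs with h1 h2
  · exact cls_eq (.r23 ⟨k, h1⟩ ⟨j, h2⟩ (by simpa [lo, hi, Fin.ext_iff] using h))
  all_goals simp

theorem cj_gO_lo {n k : ℕ} (h : k < n - 1) : cj k (gO n k) = gO n (k + 1) := by
  have h1 : k < n := by omega
  have h2 : k + 1 < n := by omega
  apply cj_eq_of_mul
  simp only [gS, gO, h, h1, h2, dif_pos]
  exact cls_eq (.r37 ⟨k, h⟩)

theorem cj_gO_hi {n k : ℕ} (h : k < n - 1) : cj k (gO n (k + 1)) = gO n k := by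
  rw [← cj_gO_lo h, cj_cj]

theorem cj_gO_far {n k j : ℕ} (h : j ≠ k ∧ j ≠ k + 1) : cj k (gO n j) = gO n j := by
  apply cj_eq_of_comm
  unfold gS gO
  split_ifs with h1 h2
  · exact cls_eq (.r36 ⟨k, h1⟩ ⟨j, h2⟩ (by simpa [lo, hi, Fin.ext_iff] using h))
  all_goals simp

theorem exists_cj_gE {n k j : ℕ} (hk : k < n - 1) (hj : j < n) :
    ∃ m < n, cj k (gE n j) = gE n m := by
  by_cases h1 : j = k
  · subst h1; exact ⟨j + 1, by omega, cj_gE_lo hk⟩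
  by_cases h2 : j = k + 1
  · subst h2; exact ⟨k, by omega, cj_gE_hi hk⟩
  exact ⟨j, hj, cj_gE_far ⟨h1, h2⟩⟩

theorem exists_cj_gO {n k j : ℕ} (hk : k < n - 1) (hj : j < n) :
    ∃ m < n, cj k (gO n j) = gO n m := by
  by_cases h1 : j = k
  · subst h1; exact ⟨j + 1, by omega, cj_gO_lo hk⟩
  by_cases h2 : j = k + 1
  · subst h2; exact ⟨k, by omega, cj_gO_hi hk⟩
  exact ⟨j, hj, cj_gO_far ⟨h1, h2⟩⟩

theorem gS_mul_gQ {n k : ℕ} (h : k < n - 1) : gS n k * gQ n k = gQ n k := by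
  simp only [gS, gQ, h, dif_pos]
  exact cls_eq (.r30b ⟨k, h⟩)

theorem gQ_mul_gS {n k : ℕ} (h : k < n - 1) : gQ n k * gS n k = gQ n k := by
  simp only [gS, gQ, h, dif_pos]
  exact cls_eq (.r30a ⟨k, h⟩)

theorem cj_gQ_self {n k : ℕ} (h : k < n - 1) : cj k (gQ n k) = gQ n k := by
  rw [cj, gS_mul_gQ h, gQ_mul_gS h]

theorem cj_gQ_far {n k l : ℕ} (h : k + 1 < l ∨ l + 1 < k) : cj k (gQ n l) = gQ n l := by
  apply cj_eq_of_comm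
  unfold gS gQ
  split_ifs with h1 h2
  · exact cls_eq (.r28 ⟨k, h1⟩ ⟨l, h2⟩ h)
  all_goals simp

/-- `s_{k+1} q_k s_{k+1} = s_k q_{k+1} s_k`: both are the class of `τ_{k,k+2}`. -/
theorem cj_gQ_adj {n k : ℕ} (h : k + 1 < n - 1) :
    cj (k + 1) (gQ n k) = cj k (gQ n (k + 1)) := by
  have h' : k < n - 1 := by omega
  have h1 : gS n k * gS n (k + 1) * gQ n k = gQ n (k + 1) * gS n k * gS n (k + 1) := by
    simp only [gS, gQ, h, h', dif_pos]
    exact cls_eq (.r29 ⟨k, h'⟩ ⟨k + 1, h⟩ (Or.inl rfl))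
  calc cj (k + 1) (gQ n k)
      = gS n k * (gS n k * gS n (k + 1) * gQ n k) * gS n (k + 1) := by
        simp only [cj, mul_assoc, gS_sq_assoc]
    _ = cj k (gQ n (k + 1)) := by
        rw [h1]; simp only [cj, mul_assoc, gS_sq, mul_one]

theorem gE_idem {n j : ℕ} (h : j < n) : gE n j * gE n j = gE n j := by
  simp only [gE, h, dif_pos]
  exact cls_eq (.r21 ⟨j, h⟩)

theorem gO_gE_gO {n j : ℕ} (h : j < n) : gO n j * gE n j * gO n j = gO n j := by
  simp only [gO, gE, h, dif_pos]
  exact cls_eq (.r40 ⟨j, h⟩)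

theorem gQ_gE_gQ {n k : ℕ} (h : k < n - 1) : gQ n k * gE n k * gQ n k = gQ n k := by
  have h' : k < n := by omega
  simp only [gQ, gE, h, h', dif_pos]
  exact cls_eq (.r32 ⟨k, h⟩ ⟨k, h'⟩ (Or.inl rfl))

theorem gE_gQ_gE_lo {n k : ℕ} (h : k < n - 1) : gE n k * gQ n k * gE n k = gE n k := by
  have h' : k < n := by omega
  simp only [gQ, gE, h, h', dif_pos]
  exact cls_eq (.r33 ⟨k, h⟩ ⟨k, h'⟩ (Or.inl rfl))

theorem gE_gQ_gE_hi {n k : ℕ} (h : k < n - 1) :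
    gE n (k + 1) * gQ n k * gE n (k + 1) = gE n (k + 1) := by
  have h' : k + 1 < n := by omega
  simp only [gQ, gE, h, h', dif_pos]
  exact cls_eq (.r33 ⟨k, h⟩ ⟨k + 1, h'⟩ (Or.inr rfl))

/-! ### Conjugates of the generators `q_k` -/

/-- The class of `τ_{i,i+1+d}`, built from `q_i` by conjugating successively by
`s_{i+1}, …, s_{i+d}`. -/
def gT (n i : ℕ) : ℕ → RookM n
  | 0 => gQ n i
  | d + 1 => cj (i + 1 + d) (gT n i d)

/-- `s_k` commutes with `τ_ij` when `k` is away from `{i-1,…,j}`. -/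
theorem cj_gT_far {n i k : ℕ} : ∀ d, (k + 1 < i ∨ i + 1 + d < k) → cj k (gT n i d) = gT n i d
  | 0, h => cj_gQ_far (by omega)
  | d + 1, h => by
    rw [gT, cj_comm (by omega), cj_gT_far d (by omega)]

/-- `s_k` commutes with `τ_ij` when `i < k` and `k + 1 < j`. -/
theorem cj_gT_mid {n i k : ℕ} (hik : i < k) :
    ∀ d, i + d < n - 1 → k < i + d → cj k (gT n i d) = gT n i d
  | 0, _, h => by omega
  | d + 1, hd, h => by
    by_cases hk : k < i + d
    · rw [gT, cj_comm (by omega), cj_gT_mid hik d (by omega) hk]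
    · obtain ⟨d, rfl⟩ : ∃ d', d = d' + 1 := ⟨d - 1, by omega⟩
      obtain rfl : k = i + 1 + d := by omega
      rw [gT, gT, ← add_assoc, cj_braid (by omega), cj_gT_far d (by omega)]

/-- Conjugation by `s_i` turns `τ_{i+1,j}` into `τ_ij`. -/
theorem cj_gT_pred {n i : ℕ} : ∀ d, i + 1 + d < n - 1 →
    cj i (gT n (i + 1) d) = gT n i (d + 1)
  | 0, h => (cj_gQ_adj h).symm
  | d + 1, h => by
    rw [gT, cj_comm (by omega), cj_gT_pred d (by omega), gT, gT]
    congr 1; omega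

/-- The classes of the `τ_ij` are permuted by conjugation by the simple transpositions. -/
theorem exists_cj_gT {n i d k : ℕ} (hk : k < n - 1) (hd : i + d < n - 1) :
    ∃ i' d', i' + d' < n - 1 ∧ cj k (gT n i d) = gT n i' d' := by
  by_cases h1 : k + 1 < i ∨ i + 1 + d < k
  · exact ⟨i, d, hd, cj_gT_far d h1⟩
  by_cases h2 : k + 1 = i
  · subst h2
    exact ⟨k, d + 1, by omega, cj_gT_pred d (by omega)⟩
  by_cases h3 : k = i + 1 + d
  · subst h3
    exact ⟨i, d + 1, by omega, rfl⟩
  by_cases h4 : i < k ∧ k < i + d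
  · exact ⟨i, d, hd, cj_gT_mid h4.1 d hd h4.2⟩
  obtain rfl | ⟨d, rfl⟩ : d = 0 ∨ ∃ d', d = d' + 1 := by
    cases d
    · exact Or.inl rfl
    · exact Or.inr ⟨_, rfl⟩
  · obtain rfl : k = i := by omega
    exact ⟨k, 0, hd, cj_gQ_self hk⟩
  · by_cases h5 : k = i
    · subst h5
      exact ⟨k + 1, d, by omega, by rw [← cj_gT_pred d (by omega), cj_cj]⟩
    · obtain rfl : k = i + 1 + d := by omega
      exact ⟨i, d, by omega, by rw [gT, cj_cj]⟩

/-- `τ_ij e_m τ_ij = τ_ij` for some `m`, as a conjugate of `q_i e_i q_i = q_i`. -/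
theorem exists_gT_gE_gT {n i : ℕ} : ∀ d, i + d < n - 1 →
    ∃ m < n, gT n i d * gE n m * gT n i d = gT n i d
  | 0, h => ⟨i, by omega, gQ_gE_gQ h⟩
  | d + 1, h => by
    obtain ⟨m, hm, hmT⟩ := exists_gT_gE_gT (n := n) (i := i) d (by omega)
    obtain ⟨m', hm', he⟩ := exists_cj_gE (k := i + 1 + d) (by omega) hm
    exact ⟨m', hm', by rw [gT, ← he, ← cj_mul, ← cj_mul, hmT]⟩

theorem filter_Ioo_succ {i j : ℕ} (hij : i < j) : ∀ {m : ℕ}, j < m →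
    (List.range m).filter (fun k => decide (i < k ∧ k < j + 1)) =
      (List.range m).filter (fun k => decide (i < k ∧ k < j)) ++ [j]
  | m + 1, hm => by
    rw [List.range_succ, List.filter_append, List.filter_append]
    by_cases h : j < m
    · rw [filter_Ioo_succ hij h]
      have h1 : ¬ (i < m ∧ m < j + 1) := by omega
      have h2 : ¬ (i < m ∧ m < j) := by omega
      rw [List.filter_cons_of_neg (by simpa using h1), List.filter_cons_of_neg (by simpa using h2)]
      simp
    · obtain rfl : j = m := by omega
      have h1 : (List.range j).filter (fun k => decide (i < k ∧ k < j + 1)) =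
          (List.range j).filter (fun k => decide (i < k ∧ k < j)) := by
        apply List.filter_congr
        intro x hx
        have := List.mem_range.mp hx
        simp only [decide_eq_decide]
        omega
      rw [h1, List.filter_cons_of_pos (by simpa using hij), List.filter_cons_of_neg (by simp)]
      simp

theorem sigmaW_self {n i : ℕ} (hi : i < n) (hj : i + 1 < n) :
    sigmaW (⟨i, hi⟩ : Fin n) ⟨i + 1, hj⟩ = [] := by
  simp only [sigmaW, List.map_eq_nil_iff, List.filter_eq_nil_iff, decide_eq_true_eq]
  intro a _
  omega

theorem sigmaW_succ {n i j : ℕ} (hij : i < j) (hi : i < n) (hj : j < n - 1) :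
    sigmaW (⟨i, hi⟩ : Fin n) ⟨j + 1, by omega⟩ =
      sigmaW (⟨i, hi⟩ : Fin n) ⟨j, by omega⟩ ++ [SEQO.s ⟨j, hj⟩] := by
  have key : (List.finRange (n - 1)).filter (fun k => decide (i < k.val ∧ k.val < j + 1)) =
      (List.finRange (n - 1)).filter (fun k => decide (i < k.val ∧ k.val < j)) ++ [⟨j, hj⟩] := by
    apply List.map_injective_iff.mpr Fin.val_injective
    have h := filter_Ioo_succ hij hj
    rw [← List.map_coe_finRange_eq_range, List.filter_map, List.filter_map] at h
    rw [List.map_append]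
    exact h
  simp only [sigmaW, key, List.map_append, List.map_cons, List.map_nil]

theorem cls_s {n k : ℕ} (h : k < n - 1) : cls [SEQO.s ⟨k, h⟩] = gS n k := by
  simp only [gS, h, dif_pos]

theorem cls_q {n k : ℕ} (h : k < n - 1) : cls [SEQO.q ⟨k, h⟩] = gQ n k := by
  simp only [gQ, h, dif_pos]

theorem cls_e {n k : ℕ} (h : k < n) : cls [SEQO.e ⟨k, h⟩] = gE n k := by
  simp only [gE, h, dif_pos]

theorem cls_o {n k : ℕ} (h : k < n) : cls [SEQO.o ⟨k, h⟩] = gO n k := by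
  simp only [gO, h, dif_pos]

theorem cls_tauW {n i : ℕ} : ∀ (d : ℕ) (h : i + 1 + d < n),
    cls (tauW (⟨i, by omega⟩ : Fin n) ⟨i + 1 + d, h⟩ (Fin.mk_lt_mk.mpr (by omega))) = gT n i d
  | 0, h => by
    have := sigmaW_self (n := n) (i := i) (by omega) h
    simp only [tauW, Nat.add_zero, this, List.reverse_nil, List.nil_append]
    exact cls_q _
  | d + 1, h => by
    have ih := cls_tauW (n := n) (i := i) d (by omega)
    have hs := sigmaW_succ (n := n) (i := i) (j := i + 1 + d) (by omega) (by omega) (by omega)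
    rw [gT, ← ih, cj, ← cls_s (k := i + 1 + d) (by omega)]
    simp only [tauW, ← Nat.add_assoc, hs, List.reverse_append, ← cls_append]
    simp

/-! ### The image of `ρ` -/

/-- The image of `ρ` in the quotient monoid. -/
def Im {n : ℕ} (x : RookM n) : Prop := ∃ u : List (ETO n), u ≠ [] ∧ cls (rho u) = x

theorem rho_append {n : ℕ} (u v : List (ETO n)) : rho (u ++ v) = rho u ++ rho v := by
  induction u with
  | nil => rfl
  | cons a u ih =>
    change rhoLetter a ++ rho (u ++ v) = (rhoLetter a ++ rho u) ++ rho v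
    rw [ih, List.append_assoc]

theorem Im.mul {n : ℕ} {x y : RookM n} (hx : Im x) (hy : Im y) : Im (x * y) := by
  obtain ⟨u, hu, rfl⟩ := hx
  obtain ⟨v, _, rfl⟩ := hy
  exact ⟨u ++ v, by simp [hu], by rw [rho_append, cls_append]⟩

theorem Im.letter {n : ℕ} (a : ETO n) : Im (cls (rhoLetter a)) :=
  ⟨[a], by simp, congrArg cls (List.append_nil _)⟩

theorem Im.gE {n j : ℕ} (h : j < n) : Im (gE n j) := by
  rw [← cls_e h]; exact Im.letter (.e ⟨j, h⟩)

theorem Im.gO {n j : ℕ} (h : j < n) : Im (gO n j) := by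
  rw [← cls_o h]; exact Im.letter (.o ⟨j, h⟩)

theorem Im.gT {n i d : ℕ} (h : i + d < n - 1) : Im (gT n i d) := by
  rw [← cls_tauW d (by omega)]; exact Im.letter (.t _ _ (Fin.mk_lt_mk.mpr (by omega)))

theorem Im.gQ {n k : ℕ} (h : k < n - 1) : Im (gQ n k) := Im.gT (d := 0) h

/-- The image of `ρ` is generated by the classes of the `e_j`, the `o_j` and the `τ_ij`. -/
theorem Im.induction {n : ℕ} {P : RookM n → Prop}
    (hE : ∀ j < n, P (RookPaper.gE n j)) (hO : ∀ j < n, P (RookPaper.gO n j))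
    (hT : ∀ i d, i + d < n - 1 → P (RookPaper.gT n i d))
    (hmul : ∀ x y, Im x → P x → Im y → P y → P (x * y)) {x : RookM n} (hx : Im x) : P x := by
  have hletter : ∀ a : ETO n, P (cls (rhoLetter a)) := by
    rintro (j | ⟨i, j, h⟩ | j)
    · rw [rhoLetter, ← Fin.eta j j.2, cls_e]; exact hE _ j.2
    · obtain ⟨i, hi⟩ := i
      obtain ⟨j, hj⟩ := j
      obtain ⟨d, rfl⟩ : ∃ d, j = i + 1 + d := ⟨j - (i + 1), by have := Fin.mk_lt_mk.mp h; omega⟩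
      rw [rhoLetter, cls_tauW d hj]; exact hT i d (by omega)
    · rw [rhoLetter, ← Fin.eta j j.2, cls_o]; exact hO _ j.2
  obtain ⟨u, hu, rfl⟩ := hx
  induction u with
  | nil => exact absurd rfl hu
  | cons a u ih =>
    by_cases h : u = []
    · subst h
      have : rho [a] = rhoLetter a := List.append_nil _
      rw [this]; exact hletter a
    · exact hmul _ _ (Im.letter a) (hletter a) ⟨u, h, rfl⟩ (ih h)

theorem Im.cj {n k : ℕ} (hk : k < n - 1) {x : RookM n} (hx : Im x) : Im (cj k x) := by
  refine Im.induction (P := fun x => Im (RookPaper.cj k x)) ?_ ?_ ?_ ?_ hx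
  · intro j hj
    obtain ⟨m, hm, h⟩ := exists_cj_gE hk hj
    exact h ▸ Im.gE hm
  · intro j hj
    obtain ⟨m, hm, h⟩ := exists_cj_gO hk hj
    exact h ▸ Im.gO hm
  · intro i d hd
    obtain ⟨i', d', hd', h⟩ := exists_cj_gT hk hd
    exact h ▸ Im.gT hd'
  · intro x y _ hx _ hy
    rw [cj_mul]
    exact hx.mul hy

/-- `e_k s_k = e_k q_k e_{k+1}`. -/
theorem Im.gE_gS_lo {n k : ℕ} (hk : k < n - 1) : Im (RookPaper.gE n k * gS n k) := by
  have h : RookPaper.gE n k * gS n k =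
      RookPaper.gE n k * RookPaper.gQ n k * RookPaper.gE n (k + 1) := by
    rw [← gE_gQ_gE_lo hk, mul_assoc _ _ (gS n k), mul_gS k (RookPaper.gE n k), cj_gE_lo hk,
      ← mul_assoc _ (gS n k), mul_assoc _ _ (gS n k), gQ_mul_gS hk, gE_gQ_gE_lo hk]
  rw [h]
  exact ((Im.gE (by omega)).mul (Im.gQ hk)).mul (Im.gE (by omega))

/-- `e_{k+1} s_k = e_{k+1} q_k e_k`. -/
theorem Im.gE_gS_hi {n k : ℕ} (hk : k < n - 1) : Im (RookPaper.gE n (k + 1) * gS n k) := by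
  have h : RookPaper.gE n (k + 1) * gS n k =
      RookPaper.gE n (k + 1) * RookPaper.gQ n k * RookPaper.gE n k := by
    rw [← gE_gQ_gE_hi hk, mul_assoc _ _ (gS n k), mul_gS k (RookPaper.gE n (k + 1)), cj_gE_hi hk,
      ← mul_assoc _ (gS n k), mul_assoc _ _ (gS n k), gQ_mul_gS hk, gE_gQ_gE_hi hk]
  rw [h]
  exact ((Im.gE (by omega)).mul (Im.gQ hk)).mul (Im.gE (by omega))

/-- Three points `c, a, b` suffice to realise the transposition `(a b)` next to the isolated
point `c`: it is the product of `(c a)`, `(a b)` and `(b c)`, and the isolated point moves along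
`c → a → b → c`, so that each factor involves it. This is the case
`(c, a, b) = (k+2, k+1, k)`. -/
theorem Im.gE_gS_two_above {n k : ℕ} (hk : k + 1 < n - 1) :
    Im (RookPaper.gE n (k + 2) * gS n k) := by
  have hca : RookPaper.gE n (k + 2) * gS n (k + 1) = gS n (k + 1) * RookPaper.gE n (k + 1) := by
    rw [mul_gS, cj_gE_hi hk]
  have h : RookPaper.gE n (k + 2) * gS n k =
      (RookPaper.gE n (k + 2) * gS n (k + 1)) * (RookPaper.gE n (k + 1) * gS n k) *
        RookPaper.cj k (RookPaper.gE n (k + 1) * gS n (k + 1)) := by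
    have e1 := gE_idem (n := n) (j := k + 1) (by omega)
    have e1' : ∀ x, RookPaper.gE n (k + 1) * (RookPaper.gE n (k + 1) * x) =
        RookPaper.gE n (k + 1) * x := fun x => by rw [← mul_assoc, e1]
    rw [hca]
    simp only [RookPaper.cj, mul_assoc, gS_sq_assoc, e1']
    rw [← mul_assoc (gS n (k + 1)), ← hca, mul_assoc, gS_sq_assoc]
  rw [h]
  exact ((Im.gE_gS_hi hk).mul (Im.gE_gS_hi (by omega))).mul
    (Im.cj (by omega) (Im.gE_gS_lo hk))

/-- The case `(c, a, b) = (k, k+1, k+2)` of the same factorisation. -/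
theorem Im.gE_gS_one_below {n k : ℕ} (hk : k + 1 < n - 1) :
    Im (RookPaper.gE n k * gS n (k + 1)) := by
  have hca : RookPaper.gE n k * gS n k = gS n k * RookPaper.gE n (k + 1) := by
    rw [mul_gS, cj_gE_lo (by omega)]
  have h : RookPaper.gE n k * gS n (k + 1) =
      (RookPaper.gE n k * gS n k) * (RookPaper.gE n (k + 1) * gS n (k + 1)) *
        RookPaper.cj (k + 1) (RookPaper.gE n (k + 1) * gS n k) := by
    have e1 := gE_idem (n := n) (j := k + 1) (by omega)
    have e1' : ∀ x, RookPaper.gE n (k + 1) * (RookPaper.gE n (k + 1) * x) =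
        RookPaper.gE n (k + 1) * x := fun x => by rw [← mul_assoc, e1]
    rw [hca]
    simp only [RookPaper.cj, mul_assoc, gS_sq_assoc, e1']
    rw [← mul_assoc (gS n k), ← hca, mul_assoc, gS_sq_assoc]
  rw [h]
  exact ((Im.gE_gS_lo (by omega)).mul (Im.gE_gS_lo hk)).mul
    (Im.cj hk (Im.gE_gS_hi (by omega)))

/-- Conjugation by `s_j` moves the isolated point from `j` to `j+1` and fixes `s_k` when `k` and
`j` are not adjacent, so the remaining cases reduce to those near `k`. -/
theorem Im.gE_gS {n j k : ℕ} (hk : k < n - 1) (hj : j < n) :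
    Im (RookPaper.gE n j * gS n k) := by
  have above : ∀ d, k + 2 + d < n → Im (RookPaper.gE n (k + 2 + d) * gS n k) := by
    intro d
    induction d with
    | zero => intro h; exact Im.gE_gS_two_above (by omega)
    | succ d ih =>
      intro h
      have h1 := Im.cj (k := k + 2 + d) (by omega) (ih (by omega))
      rwa [cj_mul, cj_gE_lo (by omega), cj_gS_of_far (by omega)] at h1
  have below : ∀ d j, j + 1 + d = k → Im (RookPaper.gE n j * gS n k) := by
    intro d
    induction d with
    | zero => rintro j rfl; exact Im.gE_gS_one_below hk
    | succ d ih =>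
      intro j h
      have h1 := Im.cj (k := j) (by omega) (ih (j + 1) (by omega))
      rwa [cj_mul, cj_gE_hi (by omega), cj_gS_of_far (by omega)] at h1
  by_cases h1 : j < k
  · exact below (k - j - 1) j (by omega)
  by_cases h2 : j = k
  · subst h2; exact Im.gE_gS_lo hk
  by_cases h3 : j = k + 1
  · subst h3; exact Im.gE_gS_hi hk
  have := above (j - (k + 2)) (by omega)
  rwa [Nat.add_sub_cancel' (by omega)] at this

/-- The image of `ρ` absorbs `s_k` on the right. A generator `g` other than an `e_j` satisfies
`g e_m g = g` for some `m`, so that `g s_k = g (e_m s_k) (s_k g s_k)`. -/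
theorem Im.mul_gS {n k : ℕ} (hk : k < n - 1) {x : RookM n} (hx : Im x) : Im (x * gS n k) := by
  have key : ∀ g : RookM n, Im g → (∃ m < n, g * RookPaper.gE n m * g = g) →
      Im (g * gS n k) := by
    rintro g hg ⟨m, hm, h⟩
    have h1 : g * gS n k = g * (RookPaper.gE n m * gS n k) * RookPaper.cj k g := by
      conv_lhs => rw [← h]
      simp only [RookPaper.cj, mul_assoc, gS_sq_assoc]
    rw [h1]
    exact (hg.mul (Im.gE_gS hk hm)).mul (Im.cj hk hg)
  refine Im.induction (P := fun x => Im (x * gS n k)) ?_ ?_ ?_ ?_ hx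
  · exact fun j hj => Im.gE_gS hk hj
  · exact fun j hj => key _ (Im.gO hj) ⟨j, hj, gO_gE_gO hj⟩
  · exact fun i d hd => key _ (Im.gT hd) (exists_gT_gE_gT d hd)
  · intro x y hx _ _ hy
    rw [mul_assoc]
    exact hx.mul hy

theorem Im.gS_mul {n k : ℕ} (hk : k < n - 1) {x : RookM n} (hx : Im x) : Im (gS n k * x) := by
  rw [RookPaper.gS_mul]
  exact Im.mul_gS hk (Im.cj hk hx)

theorem Im.mul_cls {n : ℕ} (w : List (SEQO n)) (hw : ∀ a ∈ w, SEQO.isS a) :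
    ∀ {x : RookM n}, Im x → Im (x * cls w) := by
  induction w with
  | nil => intro x hx; rwa [cls_nil, mul_one]
  | cons a w ih =>
    intro x hx
    have ha := hw a (by simp)
    rw [cls_cons, ← mul_assoc]
    apply ih fun b hb => hw b (by simp [hb])
    cases a with
    | s k => exact cls_s k.2 ▸ Im.mul_gS k.2 hx
    | _ => exact ha.elim

theorem Im.cls_of_not_isS {n : ℕ} {a : SEQO n} (ha : ¬ a.isS) : Im (cls [a]) := by
  cases a with
  | s k => exact absurd trivial ha
  | e j => exact Im.letter (.e j)
  | q k => exact cls_q k.2 ▸ Im.gQ k.2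
  | o j => exact Im.letter (.o j)

theorem Im.cls {n : ℕ} : ∀ w : List (SEQO n), (¬ ∀ a ∈ w, SEQO.isS a) → Im (cls w)
  | [], h => absurd (by simp) h
  | a :: w, h => by
    rw [cls_cons]
    by_cases hw : ∀ b ∈ w, SEQO.isS b
    · exact Im.mul_cls w hw (Im.cls_of_not_isS fun ha => h (by simpa [ha] using hw))
    · have ih := Im.cls w hw
      by_cases ha : a.isS
      · cases a with
        | s k => exact cls_s k.2 ▸ Im.gS_mul k.2 ih
        | _ => exact ha.elim
      · exact (Im.cls_of_not_isS ha).mul ih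

/-- every `w ∈ (S ∪ E ∪ Q ∪ O)*` with `w ∉ S*` is `≈`-equivalent to an
element of the image of `ρ`. -/
theorem stmt15 (n : ℕ) (hn : 2 ≤ n) (w : List (SEQO n)) (hw : ¬ ∀ x ∈ w, SEQO.isS x) :
    ∃ u : List (ETO n), u ≠ [] ∧ CongGen (RelSEQO n) w (rho u) := by
  obtain ⟨u, hu, h⟩ := Im.cls w hw
  exact ⟨u, hu, CongGen.symm (Quotient.exact h)⟩

end RookPaper
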